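/- arXiv:2006.06630 — 3 statements merged into one kernel-verified Lean document; each statement's English description precedes it below -/
import Mathlib

section
/- Conservative CLog-nets create no new data values: if N is a conservative CLog-net with catalog instance Cat and initial marking m0, and C is the (finite) set of constants occurring in the guards and output flows of N, then for every marking m reachable from m0, Val(m) ⊆ Val(m0) ∪ Val(Cat) ∪ C. -/
/-- A CLog-net over places `P`, transitions `T`, variables `Var`, values `V`,
data types `DT`, and catalog instances `Cat`. -/
structure CLogNet (P T Var V DT Cat : Type) where
  /-- value domain `Δ_D` of each data type -/
  dom : DT → Set V
  /-- variable typing function -/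
  vtype : Var → DT
  /-- the set of fresh ν-variables -/
  nu : Set Var
  /-- color of each place: a tuple of data types -/
  color : P → List DT
  /-- input flow: a multiset of inscriptions (tuples of ordinary variables) -/
  flowIn : P → T → Multiset (List Var)
  /-- output flow: a multiset of tuples of variables (ordinary or ν) and constants -/
  flowOut : T → P → Multiset (List (Var ⊕ V))
  /-- `Val(Cat)`: the set of constants occurring in a catalog instance -/
  catVal : Cat → Set V
  /-- a catalog instance is a finite set of facts, so `Val(Cat)` is finite -/
  catValFinite : ∀ c, (catVal c).Finite
  /-- satisfaction of the guard `Q ∧ φ` of a transition under a binding, in a catalog -/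
  guardSat : T → (Var → V) → Cat → Prop
  /-- the constants occurring in the guard of a transition -/
  guardConsts : T → Set V
  /-- the constants occurring in guards form a finite set -/
  guardConstsFinite : ∀ t, (guardConsts t).Finite
  /-- input inscriptions are typed according to the place color -/
  flowInTyped : ∀ p t, ∀ ins ∈ flowIn p t,
    List.Forall₂ (fun x D => vtype x = D) ins (color p)
  /-- input inscriptions use only ordinary variables -/
  flowInOrdinary : ∀ p t, ∀ ins ∈ flowIn p t, ∀ x ∈ ins, x ∉ nu
  /-- output inscriptions are typed according to the place color -/
  flowOutTyped : ∀ t p, ∀ ins ∈ flowOut t p,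
    List.Forall₂ (fun e D => Sum.elim (fun x => vtype x = D) (fun v => v ∈ dom D) e)
      ins (color p)

variable {P T Var V DT Cat : Type}

/-- A marking assigns to each place a finite multiset of tuples of values. -/
abbrev Marking (P V : Type) := P → Multiset (List V)

namespace CLogNet

/-- `m` is a marking of `N`: every token in place `p` is a tuple over `Δ_color(p)`. -/
def IsMarking (N : CLogNet P T Var V DT Cat) (m : Marking P V) : Prop :=
  ∀ p, ∀ tup ∈ m p, List.Forall₂ (fun v D => v ∈ N.dom D) tup (N.color p)

/-- `Val(m)`: the set of values occurring in a marking. -/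
def MVal (m : Marking P V) : Set V := {v | ∃ p, ∃ tup ∈ m p, v ∈ tup}

/-- A type-respecting binding. -/
def IsBinding (N : CLogNet P T Var V DT Cat) (σ : Var → V) : Prop :=
  ∀ x, σ x ∈ N.dom (N.vtype x)

/-- The variables occurring in the input flow of a transition. -/
def inVars (N : CLogNet P T Var V DT Cat) (t : T) : Set Var :=
  {x | ∃ p, ∃ ins ∈ N.flowIn p t, x ∈ ins}

/-- The variables occurring in the output flow of a transition. -/
def outVars (N : CLogNet P T Var V DT Cat) (t : T) : Set Var :=
  {x | ∃ p, ∃ ins ∈ N.flowOut t p, Sum.inl x ∈ ins}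

/-- The constants occurring in the output flow of a transition. -/
def outConsts (N : CLogNet P T Var V DT Cat) (t : T) : Set V :=
  {v | ∃ p, ∃ ins ∈ N.flowOut t p, Sum.inr v ∈ ins}

/-- Application of a binding to a multiset of input inscriptions. -/
def evalIn (σ : Var → V) (s : Multiset (List Var)) : Multiset (List V) :=
  s.map (List.map σ)

/-- Application of a binding to a multiset of output inscriptions. -/
def evalOut (σ : Var → V) (s : Multiset (List (Var ⊕ V))) : Multiset (List V) :=
  s.map (List.map (Sum.elim σ id))

/-- Transition `t` is enabled in marking `m` and catalog instance `c` under binding `σ`: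
(i) the bound input inscriptions are contained in the marking, (ii) the guard is
satisfied, (iii) ν-variables of the output flow are bound to values fresh w.r.t. the
marking and the catalog, (iv) output variables that are neither ν-variables nor input
variables are bound, via an answer of the guard query `Q`, to values of the catalog. -/
def Enabled (N : CLogNet P T Var V DT Cat) (c : Cat) (m : Marking P V) (t : T)
    (σ : Var → V) : Prop :=
  N.IsBinding σ ∧
  (∀ p, evalIn σ (N.flowIn p t) ≤ m p) ∧
  N.guardSat t σ c ∧
  (∀ x ∈ N.nu, x ∈ N.outVars t → σ x ∉ MVal m ∪ N.catVal c) ∧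
  (∀ x ∈ N.outVars t, x ∉ N.nu → x ∉ N.inVars t → σ x ∈ N.catVal c)

/-- The marking resulting from firing `t` under binding `σ`:
`m'(p) = m(p) − σ(F_in(p,t)) + σ(F_out(t,p))`. -/
def fire [DecidableEq V] (N : CLogNet P T Var V DT Cat) (m : Marking P V) (t : T)
    (σ : Var → V) : Marking P V :=
  fun p => (m p - evalIn σ (N.flowIn p t)) + evalOut σ (N.flowOut t p)

/-- One firing step `m →t m'` (for some transition `t` and enabling binding `σ`). -/
def Fires [DecidableEq V] (N : CLogNet P T Var V DT Cat) (c : Cat)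
    (m m' : Marking P V) : Prop :=
  ∃ t σ, N.Enabled c m t σ ∧ m' = N.fire m t σ

/-- Reachability by a finite sequence of firings. -/
def Reachable [DecidableEq V] (N : CLogNet P T Var V DT Cat) (c : Cat)
    (m0 m : Marking P V) : Prop :=
  Relation.ReflTransGen (N.Fires c) m0 m

/-- A CLog-net is conservative if no ν-variable occurs in any output flow. -/
def Conservative (N : CLogNet P T Var V DT Cat) : Prop :=
  ∀ t p, ∀ ins ∈ N.flowOut t p, ∀ x ∈ N.nu, Sum.inl x ∉ ins

end CLogNet

/-!
Every value that a firing puts into the marking comes from an entry of an output inscription, which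
is a constant of the output flow, an input variable (so its value lies in a consumed token), another
ordinary variable (so its value answers the guard query in the catalog), or a ν-variable.
Conservativity excludes the last case.
-/

namespace CLogNet

theorem mVal_mono : Monotone (MVal : Marking P V → Set V) := by
  rintro m m' hle v ⟨p, tup, htup, hv⟩
  exact ⟨p, tup, Multiset.mem_of_le (hle p) htup, hv⟩

theorem mVal_add (m m' : Marking P V) : MVal (m + m') = MVal m ∪ MVal m' := by
  ext v
  simp only [MVal, Pi.add_apply, Multiset.mem_add, or_and_right, exists_or, Set.mem_union,
    Set.mem_ofPred_eq]

theorem mVal_evalIn_flowIn (N : CLogNet P T Var V DT Cat) (t : T) (σ : Var → V) :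
    MVal (fun p => evalIn σ (N.flowIn p t)) = σ '' N.inVars t := by
  ext v
  constructor
  · rintro ⟨p, _, htup, hv⟩
    obtain ⟨ins, hins, rfl⟩ := Multiset.mem_map.1 htup
    obtain ⟨x, hx, rfl⟩ := List.mem_map.1 hv
    exact ⟨x, ⟨p, ins, hins, hx⟩, rfl⟩
  · rintro ⟨x, ⟨p, ins, hins, hx⟩, rfl⟩
    exact ⟨p, ins.map σ, Multiset.mem_map_of_mem _ hins, List.mem_map_of_mem hx⟩

theorem mVal_evalOut_flowOut (N : CLogNet P T Var V DT Cat) (t : T) (σ : Var → V) :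
    MVal (fun p => evalOut σ (N.flowOut t p)) = σ '' N.outVars t ∪ N.outConsts t := by
  ext v
  constructor
  · rintro ⟨p, _, htup, hv⟩
    obtain ⟨ins, hins, rfl⟩ := Multiset.mem_map.1 htup
    obtain ⟨x | w, he, rfl⟩ := List.mem_map.1 hv
    · exact Or.inl ⟨x, ⟨p, ins, hins, he⟩, rfl⟩
    · exact Or.inr ⟨p, ins, hins, he⟩
  · rintro (⟨x, ⟨p, ins, hins, he⟩, rfl⟩ | ⟨p, ins, hins, he⟩) <;>
      exact ⟨p, _, Multiset.mem_map_of_mem _ hins, List.mem_map.2 ⟨_, he, rfl⟩⟩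

theorem mVal_fire_subset [DecidableEq V] (N : CLogNet P T Var V DT Cat) (m : Marking P V) (t : T)
    (σ : Var → V) :
    MVal (N.fire m t σ) ⊆ MVal m ∪ (σ '' N.outVars t ∪ N.outConsts t) :=
  calc MVal (N.fire m t σ)
    _ = MVal (fun p => m p - evalIn σ (N.flowIn p t)) ∪
          MVal (fun p => evalOut σ (N.flowOut t p)) := mVal_add _ _
    _ ⊆ MVal m ∪ (σ '' N.outVars t ∪ N.outConsts t) :=
      Set.union_subset_union (mVal_mono fun _ => Multiset.sub_le_self _ _)
        (N.mVal_evalOut_flowOut t σ).subset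

theorem Enabled.image_inVars_subset {N : CLogNet P T Var V DT Cat} {c : Cat} {m : Marking P V}
    {t : T} {σ : Var → V} (h : N.Enabled c m t σ) : σ '' N.inVars t ⊆ MVal m := by
  obtain ⟨-, hin, -⟩ := h
  exact N.mVal_evalIn_flowIn t σ ▸ mVal_mono hin

theorem Enabled.image_outVars_diff_nu_subset {N : CLogNet P T Var V DT Cat} {c : Cat}
    {m : Marking P V} {t : T} {σ : Var → V} (h : N.Enabled c m t σ) :
    σ '' (N.outVars t \ N.nu) ⊆ MVal m ∪ N.catVal c := by
  have himage := h.image_inVars_subset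
  obtain ⟨-, -, -, -, hcat⟩ := h
  rintro _ ⟨x, ⟨hout, hnu⟩, rfl⟩
  by_cases hx : x ∈ N.inVars t
  · exact Or.inl (himage ⟨x, hx, rfl⟩)
  · exact Or.inr (hcat x hout hnu hx)

theorem Conservative.disjoint_outVars_nu {N : CLogNet P T Var V DT Cat} (hcons : N.Conservative)
    (t : T) : Disjoint (N.outVars t) N.nu :=
  Set.disjoint_left.2 fun x ⟨p, ins, hins, hx⟩ hnu => hcons t p ins hins x hnu hx

theorem Conservative.mVal_subset_of_fires [DecidableEq V] {N : CLogNet P T Var V DT Cat}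
    (hcons : N.Conservative) {c : Cat} {m m' : Marking P V} (hfires : N.Fires c m m') :
    MVal m' ⊆ MVal m ∪ N.catVal c ∪ ⋃ t : T, N.outConsts t := by
  obtain ⟨t, σ, henabled, rfl⟩ := hfires
  have hvars : σ '' N.outVars t ⊆ MVal m ∪ N.catVal c := by
    simpa only [(hcons.disjoint_outVars_nu t).sdiff_eq_left] using
      henabled.image_outVars_diff_nu_subset
  calc MVal (N.fire m t σ)
    _ ⊆ MVal m ∪ (σ '' N.outVars t ∪ N.outConsts t) := N.mVal_fire_subset m t σ
    _ ⊆ MVal m ∪ N.catVal c ∪ ⋃ t : T, N.outConsts t := by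
      rw [← Set.union_assoc]
      exact Set.union_subset_union (Set.union_subset Set.subset_union_left hvars)
        (Set.subset_iUnion N.outConsts t)

end CLogNet

theorem conservative_no_new_values_general [DecidableEq V] (N : CLogNet P T Var V DT Cat) (c : Cat)
    (m0 m : Marking P V) (hcons : N.Conservative) (hreach : N.Reachable c m0 m) :
    CLogNet.MVal m ⊆ CLogNet.MVal m0 ∪ N.catVal c ∪ ⋃ t : T, N.outConsts t := by
  induction hreach with
  | refl => exact Set.subset_union_left.trans Set.subset_union_left
  | @tail m₁ m₂ _ hfires ih =>
    calc CLogNet.MVal m₂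
      _ ⊆ CLogNet.MVal m₁ ∪ N.catVal c ∪ ⋃ t : T, N.outConsts t := hcons.mVal_subset_of_fires hfires
      _ ⊆ CLogNet.MVal m0 ∪ N.catVal c ∪ ⋃ t : T, N.outConsts t :=
        Set.union_subset
          (Set.union_subset ih (Set.subset_union_right.trans Set.subset_union_left))
          Set.subset_union_right

/-- Conservative CLog-nets create no new data values: for every
marking `m` reachable from `m0`,
`Val(m) ⊆ Val(m0) ∪ Val(Cat) ∪ C`, where `C` is the set of constants occurring in the
guards and the output flows of the net. -/
theorem conservative_no_new_values {P T Var V DT Cat : Type} [DecidableEq V]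
    (N : CLogNet P T Var V DT Cat) (c : Cat) (m0 m : Marking P V)
    (hcons : N.Conservative)
    (hreach : N.Reachable c m0 m) :
    CLogNet.MVal m ⊆
      CLogNet.MVal m0 ∪ N.catVal c ∪ ⋃ t : T, (N.guardConsts t ∪ N.outConsts t) :=
  (conservative_no_new_values_general N c m0 m hcons hreach).trans <|
    Set.union_subset_union_right _ (Set.iUnion_mono fun _ => Set.subset_union_right)
end

section
/- For a conservative CLog-net N with a fixed finite catalog instance Cat and initial marking m0, pointwise multiset inclusion is a well-quasi-order on the reachable markings: for every infinite sequence m_1, m_2, … of markings reachable from m0 there exist indices i < j such that m_i(p) ⊆ m_j(p) for every place p. -/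
variable {P T Var V DT Cat : Type}

/-!
Without fresh variables, firing a transition only moves values that are already in the marking or
brings in constants of the catalog or of the output flow. So all reachable markings draw their
values from one finite set, and since the colors fix the lengths of tuples, each place can only
ever hold finitely many different tokens. Multisets over a finite set are vectors of
multiplicities, and Dickson's lemma applies.
-/

theorem wellQuasiOrderedLE_multiset (α : Type*) [Finite α] :
    WellQuasiOrderedLE (Multiset α) := by
  classical
  exact (Finsupp.orderIsoMultiset (ι := α)).wellQuasiOrderedLE_iff.1 inferInstance

theorem isPWO_setOf_multiset_forall_mem {α : Type*} {s : Set α} (hs : s.Finite) :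
    {m : Multiset α | ∀ a ∈ m, a ∈ s}.IsPWO := by
  have := hs.to_subtype
  have := wellQuasiOrderedLE_multiset s
  have hmap : Monotone (Multiset.map ((↑) : s → α)) := fun _ _ => Multiset.map_le_map
  refine ((Set.isPWO_of_wellQuasiOrderedLE Set.univ).image_of_monotone hmap).mono fun m hm => ?_
  lift m to Multiset s using hm
  exact Set.mem_image_of_mem _ (Set.mem_univ m)

theorem finite_setOf_list_length_eq_forall_mem {α : Type*} {s : Set α} (hs : s.Finite) (n : ℕ) :
    {l : List α | l.length = n ∧ ∀ a ∈ l, a ∈ s}.Finite := by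
  have := hs.to_subtype
  refine ((List.finite_length_eq s n).image (List.map (↑))).subset ?_
  rintro l ⟨hlen, hmem⟩
  lift l to List s using hmem
  exact ⟨l, by simpa using hlen, rfl⟩

namespace CLogNet

variable {N : CLogNet P T Var V DT Cat} {c : Cat} {m m' : Marking P V} {t : T} {σ : Var → V}

theorem finite_mVal [Finite P] (m : Marking P V) : (MVal m).Finite := by
  have hunion : MVal m = ⋃ p, ⋃ tup ∈ {tup | tup ∈ m p}, {v | v ∈ tup} := by
    ext v
    simp only [MVal, Set.mem_ofPred_eq, Set.mem_iUnion, exists_prop]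
  rw [hunion]
  exact Set.finite_iUnion fun p =>
    (m p).finite_toSet.biUnion fun tup _ => tup.finite_toSet

theorem outConsts_eq_preimage_mVal (N : CLogNet P T Var V DT Cat) (t : T) :
    N.outConsts t = Sum.inr ⁻¹' MVal (N.flowOut t) :=
  rfl

theorem finite_outConsts [Finite P] (N : CLogNet P T Var V DT Cat) (t : T) :
    (N.outConsts t).Finite := by
  rw [outConsts_eq_preimage_mVal]
  exact (finite_mVal (N.flowOut t)).preimage Sum.inr_injective.injOn

theorem isPWO_setOf_isMarking_mVal_subset [Finite P] (N : CLogNet P T Var V DT Cat)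
    {S : Set V} (hS : S.Finite) : {m | N.IsMarking m ∧ MVal m ⊆ S}.IsPWO := by
  have hfinite (p : P) := finite_setOf_list_length_eq_forall_mem hS (N.color p).length
  refine (Set.IsPWO.pi fun p => isPWO_setOf_multiset_forall_mem (hfinite p)).mono ?_
  rintro m ⟨hm, hval⟩ p - tup htup
  exact ⟨(hm p tup htup).length_eq, fun v hv => hval ⟨p, tup, htup, hv⟩⟩

theorem IsMarking.fire [DecidableEq V] (hm : N.IsMarking m) (hσ : N.IsBinding σ) (t : T) :
    N.IsMarking (N.fire m t σ) := by
  intro p tup htup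
  rcases Multiset.mem_add.1 htup with hold | hnew
  · exact hm p tup (Multiset.mem_of_le (Multiset.sub_le_self _ _) hold)
  · obtain ⟨ins, hins, rfl⟩ := Multiset.mem_map.1 hnew
    refine List.forall₂_map_left_iff.2 ((N.flowOutTyped t p ins hins).imp ?_)
    rintro (x | v) D htyped
    · exact htyped ▸ hσ x
    · exact htyped

theorem Enabled.apply_mem_mVal (h : N.Enabled c m t σ) {x : Var} (hx : x ∈ N.inVars t) :
    σ x ∈ MVal m := by
  obtain ⟨p, ins, hins, hxins⟩ := hx
  exact ⟨p, ins.map σ, Multiset.mem_of_le (h.2.1 p) (Multiset.mem_map_of_mem _ hins),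
    List.mem_map_of_mem hxins⟩

theorem Enabled.apply_mem_mVal_union_catVal (h : N.Enabled c m t σ) {x : Var}
    (hx : x ∈ N.outVars t) (hnu : x ∉ N.nu) : σ x ∈ MVal m ∪ N.catVal c := by
  by_cases hin : x ∈ N.inVars t
  · exact Or.inl (h.apply_mem_mVal hin)
  · exact Or.inr (h.2.2.2.2 x hx hnu hin)

theorem Conservative.notMem_nu (hcons : N.Conservative) {x : Var} (hx : x ∈ N.outVars t) :
    x ∉ N.nu := by
  obtain ⟨p, ins, hins, hxins⟩ := hx
  exact fun hnu => hcons t p ins hins x hnu hxins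

theorem Enabled.mVal_fire_subset [DecidableEq V] (h : N.Enabled c m t σ)
    (hcons : N.Conservative) :
    MVal (N.fire m t σ) ⊆ MVal m ∪ N.catVal c ∪ N.outConsts t := by
  rintro v ⟨p, tup, htup, hv⟩
  rcases Multiset.mem_add.1 htup with hold | hnew
  · exact Or.inl (Or.inl ⟨p, tup, Multiset.mem_of_le (Multiset.sub_le_self _ _) hold, hv⟩)
  · obtain ⟨ins, hins, rfl⟩ := Multiset.mem_map.1 hnew
    obtain ⟨x | w, he, rfl⟩ := List.mem_map.1 hv
    · have hx : x ∈ N.outVars t := ⟨p, ins, hins, he⟩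
      exact Or.inl (h.apply_mem_mVal_union_catVal hx (hcons.notMem_nu hx))
    · exact Or.inr ⟨p, ins, hins, he⟩

theorem Reachable.isMarking [DecidableEq V] (h : N.Reachable c m m') (hm : N.IsMarking m) :
    N.IsMarking m' := by
  induction h with
  | refl => exact hm
  | tail _ hfires ih =>
    obtain ⟨t, σ, henabled, rfl⟩ := hfires
    exact ih.fire henabled.1 t

theorem Reachable.mVal_subset [DecidableEq V] (h : N.Reachable c m m')
    (hcons : N.Conservative) :
    MVal m' ⊆ MVal m ∪ N.catVal c ∪ ⋃ t, N.outConsts t := by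
  induction h with
  | refl => exact fun v hv => Or.inl (Or.inl hv)
  | tail _ hfires ih =>
    obtain ⟨t, σ, henabled, rfl⟩ := hfires
    refine (henabled.mVal_fire_subset hcons).trans (Set.union_subset (Set.union_subset ih ?_) ?_)
    · exact fun v hv => Or.inl (Or.inr hv)
    · exact (Set.subset_iUnion _ t).trans Set.subset_union_right

end CLogNet

/-- For a conservative CLog-net with a fixed (finite) catalog
instance and initial marking `m0`, pointwise multiset inclusion is a well-quasi-order
on the reachable markings: every infinite sequence of reachable markings contains
indices `i < j` with `m_i(p) ⊆ m_j(p)` for every place `p`. -/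
theorem conservative_reachable_wqo {P T Var V DT Cat : Type}
    [Finite P] [Finite T] [DecidableEq V]
    (N : CLogNet P T Var V DT Cat) (c : Cat) (m0 : Marking P V)
    (hm0 : N.IsMarking m0)
    (hcons : N.Conservative)
    (f : ℕ → Marking P V) (hf : ∀ i, N.Reachable c m0 (f i)) :
    ∃ i j, i < j ∧ ∀ p, f i p ≤ f j p := by
  have hfinite : (CLogNet.MVal m0 ∪ N.catVal c ∪ ⋃ t, N.outConsts t).Finite :=
    ((CLogNet.finite_mVal m0).union (N.catValFinite c)).union
      (Set.finite_iUnion N.finite_outConsts)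
  exact (N.isPWO_setOf_isMarking_mVal_subset hfinite).exists_lt
    fun i => ⟨(hf i).isMarking hm0, (hf i).mVal_subset hcons⟩
end

section
/- In the order-to-delivery CLog-net, for every catalog instance Cat over the schema {ProdCat(p:ProdType), Comp(c:CId, p:ProdType, t:TruckType)} and for every marking m reachable from an initial marking in which the places working, paid, ready, in-truck, delivered, in-house, and at-dest are empty and pool holds an arbitrary finite multiset of trucks, there is no pair (p,o) such that ⟨p,o⟩ occurs in m(delivered) and ⟨o⟩ occurs in m(working): a delivered item can never belong to a still-working (unpaid) order. -/
/-- A marking of the order-to-delivery CLog-net: places `working`, `paid` of type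
`Order`, `ready`, `delivered` of type `ProdType × Order`, `intruck` of type
`ProdType × Order × Plate`, and `pool`, `inhouse`, `atdest` of type
`Plate × TruckType`. -/
structure OTDMarking (Order ProdType Plate TruckType : Type) where
  working : Multiset Order
  paid : Multiset Order
  ready : Multiset (ProdType × Order)
  intruck : Multiset (ProdType × Order × Plate)
  delivered : Multiset (ProdType × Order)
  pool : Multiset (Plate × TruckType)
  inhouse : Multiset (Plate × TruckType)
  atdest : Multiset (Plate × TruckType)

/-- A (finite) catalog instance over the schema
`{ProdCat(p : ProdType), Comp(c : CId, p : ProdType, t : TruckType)}`. -/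
structure OTDCatalog (CId ProdType TruckType : Type) where
  prodCat : Finset ProdType
  comp : Finset (CId × ProdType × TruckType)

/-- The `Order`-typed values occurring in a marking (the catalog contains no values
of type `Order`, the types being pairwise disjoint). -/
def orderVals {Order ProdType Plate TruckType : Type}
    (m : OTDMarking Order ProdType Plate TruckType) : Set Order :=
  {o | o ∈ m.working ∨ o ∈ m.paid ∨ (∃ p, (p, o) ∈ m.ready) ∨
       (∃ p pl, (p, o, pl) ∈ m.intruck) ∨ (∃ p, (p, o) ∈ m.delivered)}

/-- The firing steps of the order-to-delivery CLog-net, for a catalog instance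
`Cat`. -/
inductive OTDStep {Order ProdType Plate TruckType CId : Type}
    [DecidableEq Order] [DecidableEq ProdType] [DecidableEq Plate]
    [DecidableEq TruckType]
    (Cat : OTDCatalog CId ProdType TruckType) :
    OTDMarking Order ProdType Plate TruckType →
    OTDMarking Order ProdType Plate TruckType → Prop
  /-- (new order): output `⟨ν_o⟩` to `working`, with `ν_o` bound to a value fresh
  w.r.t. the current marking (and the catalog, which contains no orders). -/
  | newOrder (m : OTDMarking Order ProdType Plate TruckType) (o : Order)
      (hfresh : o ∉ orderVals m) :
      OTDStep Cat m { m with working := m.working + {o} }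
  /-- (add item): consume and re-produce `⟨o⟩` on `working`, guard `ProdCat(p)`,
  output `⟨p,o⟩` to `ready`. -/
  | addItem (m : OTDMarking Order ProdType Plate TruckType) (p : ProdType) (o : Order)
      (ho : o ∈ m.working) (hp : p ∈ Cat.prodCat) :
      OTDStep Cat m { m with ready := m.ready + {(p, o)} }
  /-- (rem): consume `⟨p,o⟩` from `ready`. -/
  | rem (m : OTDMarking Order ProdType Plate TruckType) (p : ProdType) (o : Order)
      (h : (p, o) ∈ m.ready) :
      OTDStep Cat m { m with ready := m.ready.erase (p, o) }
  /-- (pay): consume `⟨o⟩` from `working`, consume and re-produce `⟨p,o⟩` on `ready`,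
  produce `⟨o⟩` in `paid`. -/
  | pay (m : OTDMarking Order ProdType Plate TruckType) (p : ProdType) (o : Order)
      (ho : o ∈ m.working) (hr : (p, o) ∈ m.ready) :
      OTDStep Cat m { m with working := m.working.erase o, paid := m.paid + {o} }
  /-- (use): move `⟨pl,t⟩` from `pool` to `inhouse`. -/
  | use (m : OTDMarking Order ProdType Plate TruckType) (pl : Plate) (t : TruckType)
      (h : (pl, t) ∈ m.pool) :
      OTDStep Cat m
        { m with pool := m.pool.erase (pl, t), inhouse := m.inhouse + {(pl, t)} }
  /-- (load): consume `⟨p,o⟩` from `ready`, consume and re-produce `⟨pl,t⟩` on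
  `inhouse` and `⟨o⟩` on `paid`, guard `∃c. Comp(c,p,t)`, produce `⟨p,o,pl⟩` in
  `intruck`. -/
  | load (m : OTDMarking Order ProdType Plate TruckType) (p : ProdType) (o : Order)
      (pl : Plate) (t : TruckType)
      (hr : (p, o) ∈ m.ready) (hh : (pl, t) ∈ m.inhouse) (hpaid : o ∈ m.paid)
      (hguard : ∃ c : CId, (c, p, t) ∈ Cat.comp) :
      OTDStep Cat m
        { m with ready := m.ready.erase (p, o), intruck := m.intruck + {(p, o, pl)} }
  /-- (drop): consume `⟨p,o,pl⟩` from `intruck`, consume and re-produce `⟨pl,t⟩` on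
  `inhouse`, produce `⟨p,o⟩` in `ready`. -/
  | drop (m : OTDMarking Order ProdType Plate TruckType) (p : ProdType) (o : Order)
      (pl : Plate) (t : TruckType)
      (hi : (p, o, pl) ∈ m.intruck) (hh : (pl, t) ∈ m.inhouse) :
      OTDStep Cat m
        { m with intruck := m.intruck.erase (p, o, pl), ready := m.ready + {(p, o)} }
  /-- (drive): move `⟨pl,t⟩` from `inhouse` to `atdest` while consuming and
  re-producing some `⟨p,o,pl⟩` on `intruck`. -/
  | drive (m : OTDMarking Order ProdType Plate TruckType) (pl : Plate) (t : TruckType)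
      (p : ProdType) (o : Order)
      (hh : (pl, t) ∈ m.inhouse) (hi : (p, o, pl) ∈ m.intruck) :
      OTDStep Cat m
        { m with inhouse := m.inhouse.erase (pl, t), atdest := m.atdest + {(pl, t)} }
  /-- (move): consume and re-produce `⟨pl,t⟩` on `atdest`. -/
  | move (m : OTDMarking Order ProdType Plate TruckType) (pl : Plate) (t : TruckType)
      (h : (pl, t) ∈ m.atdest) :
      OTDStep Cat m m
  /-- (go back): move `⟨pl,t⟩` from `atdest` to `inhouse`. -/
  | goBack (m : OTDMarking Order ProdType Plate TruckType) (pl : Plate) (t : TruckType)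
      (h : (pl, t) ∈ m.atdest) :
      OTDStep Cat m
        { m with atdest := m.atdest.erase (pl, t), inhouse := m.inhouse + {(pl, t)} }
  /-- (deliver): consume `⟨p,o,pl⟩` from `intruck`, consume and re-produce `⟨pl,t⟩`
  on `atdest`, produce `⟨p,o⟩` in `delivered`. -/
  | deliver (m : OTDMarking Order ProdType Plate TruckType) (p : ProdType) (o : Order)
      (pl : Plate) (t : TruckType)
      (hi : (p, o, pl) ∈ m.intruck) (ha : (pl, t) ∈ m.atdest) :
      OTDStep Cat m
        { m with intruck := m.intruck.erase (p, o, pl),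
                 delivered := m.delivered + {(p, o)} }

/-- The initial marking: all places empty except `pool`, which holds an arbitrary
finite multiset of trucks. -/
def OTDInit {Order ProdType Plate TruckType : Type}
    (pool0 : Multiset (Plate × TruckType)) :
    OTDMarking Order ProdType Plate TruckType :=
  { working := 0, paid := 0, ready := 0, intruck := 0, delivered := 0,
    pool := pool0, inhouse := 0, atdest := 0 }

/-!
The orders on `working` and `paid`, counted together, change only when a fresh order is created:
`pay` merely moves an order from one place to the other. So this multiset stays free of repetitions
and no working order is paid. An order enters a truck only through `load`, which tests `paid`, a
place that never loses tokens; hence every delivered order is paid and cannot be working.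
-/

section Invariants

variable {Order ProdType Plate TruckType CId : Type}

namespace OTDMarking

/-- The multiset of orders created so far. A `pay` step moves an order from `working` to `paid` and
so leaves it unchanged, and multiplicities are kept so that a repeated order would be visible. -/
def placedOrders (m : OTDMarking Order ProdType Plate TruckType) : Multiset Order :=
  m.working + m.paid

/-- The orders with at least one item in a truck or delivered, as a set since only membership,
not the number of items, matters. -/
def shippedOrders (m : OTDMarking Order ProdType Plate TruckType) : Set Order :=
  {o | (∃ p pl, (p, o, pl) ∈ m.intruck) ∨ ∃ p, (p, o) ∈ m.delivered}

theorem mem_orderVals_of_mem_placedOrders {m : OTDMarking Order ProdType Plate TruckType}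
    {o : Order} (ho : o ∈ m.placedOrders) : o ∈ orderVals m :=
  (Multiset.mem_add.1 ho).imp_right Or.inl

end OTDMarking

open OTDMarking

variable [DecidableEq Order] [DecidableEq ProdType] [DecidableEq Plate] [DecidableEq TruckType]
  {Cat : OTDCatalog CId ProdType TruckType} {m m' : OTDMarking Order ProdType Plate TruckType}

namespace OTDStep

theorem placedOrders_eq_or_eq_cons (h : OTDStep Cat m m') :
    m'.placedOrders = m.placedOrders ∨
      ∃ o ∉ m.placedOrders, m'.placedOrders = o ::ₘ m.placedOrders := by
  cases h with
  | newOrder o hfresh =>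
    refine .inr ⟨o, fun ho => hfresh (mem_orderVals_of_mem_placedOrders ho), ?_⟩
    simp only [placedOrders, ← Multiset.singleton_add]
    ac_rfl
  | pay p o ho =>
    left
    calc m.working.erase o + (m.paid + {o})
        = ({o} + m.working.erase o) + m.paid := by ac_rfl
      _ = m.working + m.paid := by rw [Multiset.singleton_add, Multiset.cons_erase ho]
  | _ => exact .inl rfl

theorem nodup_placedOrders (h : OTDStep Cat m m') (hm : m.placedOrders.Nodup) :
    m'.placedOrders.Nodup := by
  obtain heq | ⟨o, ho, heq⟩ := h.placedOrders_eq_or_eq_cons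
  · rwa [heq]
  · exact heq ▸ hm.cons ho

theorem paid_le (h : OTDStep Cat m m') : m.paid ≤ m'.paid := by
  cases h with
  | pay => exact Multiset.le_add_right _ _
  | _ => exact le_rfl

theorem shipped_or_paid_of_shipped (h : OTDStep Cat m m') {o : Order}
    (ho : o ∈ m'.shippedOrders) : o ∈ m.shippedOrders ∨ o ∈ m.paid := by
  cases h with
  | load p o' pl t hr hh hpaid =>
    obtain ⟨q, pl', hload⟩ | hdelivered := ho
    · obtain hold | hnew := Multiset.mem_add.1 hload
      · exact .inl (.inl ⟨q, pl', hold⟩)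
      · obtain ⟨-, rfl, -⟩ : q = p ∧ o = o' ∧ pl' = pl := by simpa using hnew
        exact .inr hpaid
    · exact .inl (.inr hdelivered)
  | drop =>
    exact .inl (ho.imp_left fun ⟨q, pl', hq⟩ => ⟨q, pl', Multiset.mem_of_mem_erase hq⟩)
  | deliver p o' pl t hi =>
    left
    obtain ⟨q, pl', hq⟩ | ⟨q, hdelivered⟩ := ho
    · exact .inl ⟨q, pl', Multiset.mem_of_mem_erase hq⟩
    · obtain hold | hnew := Multiset.mem_add.1 hdelivered
      · exact .inr ⟨q, hold⟩
      · obtain ⟨-, rfl⟩ : q = p ∧ o = o' := by simpa using hnew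
        exact .inl ⟨p, pl, hi⟩
  | _ => exact .inl ho

theorem paid_of_shipped (h : OTDStep Cat m m') (hm : ∀ o ∈ m.shippedOrders, o ∈ m.paid) :
    ∀ o ∈ m'.shippedOrders, o ∈ m'.paid := fun o ho =>
  Multiset.mem_of_le h.paid_le ((h.shipped_or_paid_of_shipped ho).elim (hm o) id)

end OTDStep

theorem nodup_placedOrders_of_reachable (h : Relation.ReflTransGen (OTDStep Cat) m m')
    (hm : m.placedOrders.Nodup) : m'.placedOrders.Nodup := by
  induction h with
  | refl => exact hm
  | tail _ hstep ih => exact hstep.nodup_placedOrders ih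

theorem paid_of_shipped_of_reachable (h : Relation.ReflTransGen (OTDStep Cat) m m')
    (hm : ∀ o ∈ m.shippedOrders, o ∈ m.paid) : ∀ o ∈ m'.shippedOrders, o ∈ m'.paid := by
  induction h with
  | refl => exact hm
  | tail _ hstep ih => exact hstep.paid_of_shipped ih

theorem otd_no_delivered_working_general
    (hnodup : m.placedOrders.Nodup) (hpaid : ∀ o ∈ m.shippedOrders, o ∈ m.paid)
    (hreach : Relation.ReflTransGen (OTDStep Cat) m m') :
    ¬ ∃ (p : ProdType) (o : Order), (p, o) ∈ m'.delivered ∧ o ∈ m'.working := by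
  rintro ⟨p, o, hdelivered, hworking⟩
  have hdisj : Disjoint m'.working m'.paid :=
    (Multiset.nodup_add.1 (nodup_placedOrders_of_reachable hreach hnodup)).2.2
  have ho : o ∈ m'.paid := paid_of_shipped_of_reachable hreach hpaid o (.inr ⟨p, hdelivered⟩)
  exact Multiset.disjoint_left.1 hdisj hworking ho

end Invariants

/-- In the order-to-delivery CLog-net, for every catalog instance
and every marking reachable from the initial marking, no pair `(p,o)` is such that
`⟨p,o⟩` occurs in `delivered` while `⟨o⟩` occurs in `working`: a delivered item can
never belong to a still-working (unpaid) order. -/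
theorem otd_no_delivered_working {Order ProdType Plate TruckType CId : Type}
    [DecidableEq Order] [DecidableEq ProdType] [DecidableEq Plate]
    [DecidableEq TruckType]
    [Countable Order] [Infinite Order] [Countable Plate] [Infinite Plate]
    (Cat : OTDCatalog CId ProdType TruckType)
    (pool0 : Multiset (Plate × TruckType))
    (m : OTDMarking Order ProdType Plate TruckType)
    (hreach : Relation.ReflTransGen (OTDStep Cat) (OTDInit pool0) m) :
    ¬ ∃ (p : ProdType) (o : Order), (p, o) ∈ m.delivered ∧ o ∈ m.working := by
  exact otd_no_delivered_working_general (by simp [OTDMarking.placedOrders, OTDInit])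
    (by simp [OTDMarking.shippedOrders, OTDInit]) hreach
end
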